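/- Let t ≥ 6, let N = ⌊√(2^(t+1)) + 0.5⌋, write N − 4 = 3a + b with a ≥ 0 an integer and b ∈ {0,1,2}, and let ε = √(2^(t+1)) + 0.5 − N ∈ [0,1). Define λ by: λ = 1 if a is odd and b = 0; λ = 2 if a is odd, b = 1 and 0 ≤ ε ≤ 1 − 2^(−(t−4)/2); λ = 1 if a is odd, b = 1 and 1 − 2^(−(t−4)/2) < ε < 1; λ = 2 if a is odd and b = 2; λ = 2 if a is even, b = 0 and 0 ≤ ε ≤ 0.5; λ = 1 if a is even, b = 0 and 0.5 < ε < 1; λ = 2 if a is even, b = 1 and 0 ≤ ε ≤ 1 − 2^(−(t−5)/2); λ = 1 if a is even, b = 1 and 1 − 2^(−(t−5)/2) < ε ≤ 1 − 2^(−(t+7)/2); λ = 0 if a is even, b = 1 and 1 − 2^(−(t+7)/2) < ε < 1; λ = 0 if a is even and b = 2. Set n_t = N − λ. Then there is no linear subspace of F_2^(n_t) of dimension n_t − t in which every nonzero vector has Hamming weight at least 5; consequently s_max(t) ≤ 2^((t+1)/2) − 2 if t is odd, and s_max(t) ≤ N − λ if t is even. -/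

import Mathlib

/-- A subset `M` of `𝔽₂ᵗ` is Sidon if `m₁+m₂ ≠ m₃+m₄` for pairwise distinct elements. -/
def IsSidon {t : ℕ} (M : Finset (Fin t → ZMod 2)) : Prop :=
  ∀ m₁ ∈ M, ∀ m₂ ∈ M, ∀ m₃ ∈ M, ∀ m₄ ∈ M,
    (m₁ ≠ m₂ ∧ m₁ ≠ m₃ ∧ m₁ ≠ m₄ ∧ m₂ ≠ m₃ ∧ m₂ ≠ m₄ ∧ m₃ ≠ m₄) →
    m₁ + m₂ ≠ m₃ + m₄

/-- `M` is sum-free if `m₁+m₂ ≠ m₃` for all `m₁,m₂,m₃ ∈ M`. -/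
def IsSumFree {t : ℕ} (M : Finset (Fin t → ZMod 2)) : Prop :=
  ∀ m₁ ∈ M, ∀ m₂ ∈ M, ∀ m₃ ∈ M, m₁ + m₂ ≠ m₃

/-- A maximal Sidon set. -/
def IsMaximalSidon {t : ℕ} (M : Finset (Fin t → ZMod 2)) : Prop :=
  IsSidon M ∧ ∀ S : Finset (Fin t → ZMod 2), IsSidon S → M ⊆ S → S = M

/-- Maximum size of a Sidon set in `𝔽₂ᵗ`. -/
noncomputable def sMax (t : ℕ) : ℕ :=
  sSup {n : ℕ | ∃ M : Finset (Fin t → ZMod 2), IsSidon M ∧ M.card = n}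

/-- 2-sums of `M`. -/
def twoSums {t : ℕ} (M : Finset (Fin t → ZMod 2)) : Finset (Fin t → ZMod 2) :=
  (M ×ˢ M).image fun p => p.1 + p.2

/-- 2-star-sums of `M` (sums of two distinct elements). -/
def twoStarSums {t : ℕ} (M : Finset (Fin t → ZMod 2)) : Finset (Fin t → ZMod 2) :=
  ((M ×ˢ M).filter fun p => p.1 ≠ p.2).image fun p => p.1 + p.2

/-- 3-sums of `M`. -/
def threeSums {t : ℕ} (M : Finset (Fin t → ZMod 2)) : Finset (Fin t → ZMod 2) :=
  ((M ×ˢ M) ×ˢ M).image fun p => p.1.1 + p.1.2 + p.2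

/-- 3-star-sums of `M` (sums of three pairwise distinct elements). -/
def threeStarSums {t : ℕ} (M : Finset (Fin t → ZMod 2)) : Finset (Fin t → ZMod 2) :=
  (((M ×ˢ M) ×ˢ M).filter fun p => p.1.1 ≠ p.1.2 ∧ p.1.1 ≠ p.2 ∧ p.1.2 ≠ p.2).image
    fun p => p.1.1 + p.1.2 + p.2

/-- 4-sums of `M`. -/
def fourSums {t : ℕ} (M : Finset (Fin t → ZMod 2)) : Finset (Fin t → ZMod 2) :=
  (((M ×ˢ M) ×ˢ M) ×ˢ M).image fun p => p.1.1.1 + p.1.1.2 + p.1.2 + p.2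

/-!
In a Sidon set `M` with `k` elements, two distinct triples with the same sum `x` are disjoint and
`x ∉ M`. So each `x ∉ M` is the sum of at most `⌊k / 3⌋` triples, and counting triples gives
`(k choose 3) ≤ (2 ^ t - k) ⌊k / 3⌋`. The refinements look at the saturated `x`, those attaining
`⌊k / 3⌋`. Such an `x` leaves `k % 3` elements of `M` uncovered, whose sum is the sum of `M` minus
`⌊k / 3⌋ • x`. If `⌊k / 3⌋` is even, that sum, and therefore the uncovered set, is the same for all
saturated `x`: an uncovered point lies in a triple with sum `x` only for unsaturated `x`, which
accounts for `(k - 1 choose 2)` further units of slack. If `⌊k / 3⌋` is odd, `x` is determined by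
its uncovered set, so at most `(k choose k % 3)` of the `x` are saturated.

The resulting bounds read `k ^ 2 + c * k ≤ 2 ^ (t + 1) + O(1)` with `c` depending on `k % 6`. As `N`
is the integer nearest to `√(2 ^ (t + 1))`, comparing them at `k = N + 1`, `N`, `N - 1` gives `λ`.
A parity check map of an `[n, n - t]` code with minimum distance at least five is injective on
vectors of weight at most two, so it sends zero and the unit vectors to a Sidon set with `n + 1`
elements in `𝔽₂ᵗ`.
-/

open Finset

section SidonSets

variable {t : ℕ} {M : Finset (Fin t → ZMod 2)}

lemma IsSidon.subset {A : Finset (Fin t → ZMod 2)} (hM : IsSidon M) (hA : A ⊆ M) : IsSidon A :=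
  fun a ha b hb c hc d hd => hM a (hA ha) b (hA hb) c (hA hc) d (hA hd)

lemma IsSidon.pair_eq_pair_of_add_eq_add (hM : IsSidon M) {a b c d : Fin t → ZMod 2}
    (ha : a ∈ M) (hb : b ∈ M) (hc : c ∈ M) (hd : d ∈ M) (hab : a ≠ b) (hcd : c ≠ d)
    (h : a + b = c + d) : ({a, b} : Finset (Fin t → ZMod 2)) = {c, d} := by
  by_cases hac : a = c
  · rw [hac] at h ⊢
    rw [add_left_cancel h]
  by_cases had : a = d
  · rw [had, add_comm c d] at h
    rw [had, add_left_cancel h, pair_comm]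
  have hbc : b ≠ c := fun e => had (add_right_cancel (h.trans (by rw [e, add_comm])))
  have hbd : b ≠ d := fun e => hac (add_right_cancel (h.trans (by rw [e])))
  exact absurd h (hM a ha b hb c hc d hd ⟨hab, hac, had, hbc, hbd, hcd⟩)

lemma IsSidon.eq_of_sum_eq_of_card_le_two (hM : IsSidon M) {A B : Finset (Fin t → ZMod 2)}
    (hA : A ⊆ M) (hB : B ⊆ M) (hcard : #A = #B) (hle : #A ≤ 2)
    (hsum : ∑ a ∈ A, a = ∑ b ∈ B, b) : A = B := by
  obtain h | h | h : #A = 0 ∨ #A = 1 ∨ #A = 2 := by omega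
  · rw [card_eq_zero.1 h, card_eq_zero.1 (hcard.symm.trans h)]
  · obtain ⟨a, rfl⟩ := card_eq_one.1 h
    obtain ⟨b, rfl⟩ := card_eq_one.1 (hcard.symm.trans h)
    rw [sum_singleton, sum_singleton] at hsum
    rw [hsum]
  · obtain ⟨a, b, hab, rfl⟩ := card_eq_two.1 h
    obtain ⟨c, d, hcd, rfl⟩ := card_eq_two.1 (hcard.symm.trans h)
    rw [sum_pair hab, sum_pair hcd] at hsum
    simp only [insert_subset_iff, singleton_subset_iff] at hA hB
    exact hM.pair_eq_pair_of_add_eq_add hA.1 hA.2 hB.1 hB.2 hab hcd hsum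

lemma IsSidon.sum_notMem_of_card_eq_three (hM : IsSidon M) {A : Finset (Fin t → ZMod 2)}
    (hA : A ⊆ M) (h3 : #A = 3) : ∑ a ∈ A, a ∉ M := by
  intro hsum
  obtain ⟨a, b, c, hab, hac, hbc, rfl⟩ := card_eq_three.1 h3
  rw [sum_insert (by simp [hab, hac]), sum_pair hbc] at hsum
  simp only [insert_subset_iff, singleton_subset_iff] at hA
  obtain ⟨ha, hb, hc⟩ := hA
  have h : a + b = (a + (b + c)) + c := by
    rw [add_assoc, add_assoc, ZModModule.add_self, add_zero]
  have hsc : a + (b + c) ≠ c := fun e => hab (sub_eq_zero.1 (by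
    rw [ZModModule.sub_eq_add, h, e, ZModModule.add_self]))
  have hpair := hM.pair_eq_pair_of_add_eq_add ha hb hsum hc hab hsc h
  have hmem : c ∈ ({a, b} : Finset (Fin t → ZMod 2)) := by rw [hpair]; simp
  simp only [mem_insert, mem_singleton] at hmem
  exact hmem.elim (fun e => hac e.symm) (fun e => hbc e.symm)

/-- The three-element subsets of `M` with sum `x`: the representations of `x` as a sum of three
distinct elements of `M`, up to order. -/
def triplesWithSum (M : Finset (Fin t → ZMod 2)) (x : Fin t → ZMod 2) :
    Finset (Finset (Fin t → ZMod 2)) :=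
  {A ∈ M.powersetCard 3 | ∑ a ∈ A, a = x}

/-- The elements of `M` which occur in no representation of `x` as a sum of three distinct
elements of `M`. -/
def leftover (M : Finset (Fin t → ZMod 2)) (x : Fin t → ZMod 2) : Finset (Fin t → ZMod 2) :=
  M \ (triplesWithSum M x).biUnion id

lemma mem_triplesWithSum {x : Fin t → ZMod 2} {A : Finset (Fin t → ZMod 2)} :
    A ∈ triplesWithSum M x ↔ (A ⊆ M ∧ #A = 3) ∧ ∑ a ∈ A, a = x := by
  rw [triplesWithSum, mem_filter, mem_powersetCard]

lemma leftover_subset (x : Fin t → ZMod 2) : leftover M x ⊆ M := sdiff_subset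

lemma biUnion_triplesWithSum_subset (x : Fin t → ZMod 2) :
    (triplesWithSum M x).biUnion id ⊆ M :=
  biUnion_subset.2 fun _ hA => (mem_triplesWithSum.1 hA).1.1

lemma IsSidon.pairwiseDisjoint_triplesWithSum (hM : IsSidon M) (x : Fin t → ZMod 2) :
    (triplesWithSum M x : Set (Finset (Fin t → ZMod 2))).PairwiseDisjoint id := by
  intro A hA B hB hne
  obtain ⟨⟨hAM, hA3⟩, hAx⟩ := mem_triplesWithSum.1 (mem_coe.1 hA)
  obtain ⟨⟨hBM, hB3⟩, hBx⟩ := mem_triplesWithSum.1 (mem_coe.1 hB)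
  refine disjoint_left.2 fun i (hiA : i ∈ A) (hiB : i ∈ B) => hne ?_
  have hcardA : #(A.erase i) = 2 := by rw [card_erase_of_mem hiA, hA3]
  have hcardB : #(B.erase i) = 2 := by rw [card_erase_of_mem hiB, hB3]
  have hsum : ∑ a ∈ A.erase i, a = ∑ b ∈ B.erase i, b := by
    apply add_left_cancel (a := i)
    rw [add_sum_erase A (fun a => a) hiA, add_sum_erase B (fun b => b) hiB, hAx, hBx]
  have herase : A.erase i = B.erase i :=
    hM.eq_of_sum_eq_of_card_le_two ((erase_subset i A).trans hAM) ((erase_subset i B).trans hBM)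
      (hcardA.trans hcardB.symm) hcardA.le hsum
  rw [← insert_erase hiA, herase, insert_erase hiB]

lemma IsSidon.card_leftover_add (hM : IsSidon M) (x : Fin t → ZMod 2) :
    #(leftover M x) + 3 * #(triplesWithSum M x) = #M := by
  have hunion : #((triplesWithSum M x).biUnion id) = #(triplesWithSum M x) * 3 := by
    rw [card_biUnion (hM.pairwiseDisjoint_triplesWithSum x)]
    exact sum_const_nat fun A hA => (mem_triplesWithSum.1 hA).1.2
  rw [mul_comm, ← hunion]
  exact card_sdiff_add_card_eq_card (biUnion_triplesWithSum_subset x)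

lemma IsSidon.sum_leftover_add (hM : IsSidon M) (x : Fin t → ZMod 2) :
    ∑ a ∈ leftover M x, a + #(triplesWithSum M x) • x = ∑ a ∈ M, a := by
  have hunion : ∑ a ∈ (triplesWithSum M x).biUnion id, a = #(triplesWithSum M x) • x := by
    rw [sum_biUnion (hM.pairwiseDisjoint_triplesWithSum x)]
    exact sum_eq_card_nsmul fun A hA => (mem_triplesWithSum.1 hA).2
  rw [← hunion]
  exact sum_sdiff (biUnion_triplesWithSum_subset x)

lemma IsSidon.card_triplesWithSum_le (hM : IsSidon M) (x : Fin t → ZMod 2) :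
    #(triplesWithSum M x) ≤ #M / 3 := by
  have := hM.card_leftover_add x
  omega

lemma IsSidon.card_leftover_eq_mod (hM : IsSidon M) {x : Fin t → ZMod 2}
    (hx : #(triplesWithSum M x) = #M / 3) : #(leftover M x) = #M % 3 := by
  have := hM.card_leftover_add x
  omega

lemma IsSidon.leftover_eq_leftover (hM : IsSidon M) (heven : Even (#M / 3))
    {x y : Fin t → ZMod 2} (hx : #(triplesWithSum M x) = #M / 3)
    (hy : #(triplesWithSum M y) = #M / 3) : leftover M x = leftover M y := by
  have hsum : ∀ z, #(triplesWithSum M z) = #M / 3 → ∑ a ∈ leftover M z, a = ∑ a ∈ M, a := by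
    intro z hz
    obtain ⟨r, hr⟩ := heven
    rw [← hM.sum_leftover_add z, hz, hr, add_nsmul, ZModModule.add_self, add_zero]
  have hcard := hM.card_leftover_eq_mod hx
  exact hM.eq_of_sum_eq_of_card_le_two (leftover_subset x) (leftover_subset y)
    (hcard.trans (hM.card_leftover_eq_mod hy).symm) (by omega) ((hsum x hx).trans (hsum y hy).symm)

lemma IsSidon.exists_mem_leftover (hM : IsSidon M) (hmod : #M % 3 ≠ 0) (heven : Even (#M / 3)) :
    ∃ p ∈ M, ∀ x, #(triplesWithSum M x) = #M / 3 → p ∈ leftover M x := by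
  by_cases hex : ∃ y, #(triplesWithSum M y) = #M / 3
  · obtain ⟨y, hy⟩ := hex
    have hcard := hM.card_leftover_eq_mod hy
    obtain ⟨p, hp⟩ := card_pos.1 (show 0 < #(leftover M y) by omega)
    exact ⟨p, leftover_subset y hp, fun x hx => hM.leftover_eq_leftover heven hx hy ▸ hp⟩
  · obtain ⟨p, hp⟩ := card_pos.1 (show 0 < #M by omega)
    exact ⟨p, hp, fun x hx => absurd ⟨x, hx⟩ hex⟩

lemma IsSidon.card_filter_card_triplesWithSum_eq_le (hM : IsSidon M) (hodd : Odd (#M / 3)) :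
    #{x | #(triplesWithSum M x) = #M / 3} ≤ (#M).choose (#M % 3) := by
  have hx : ∀ x, #(triplesWithSum M x) = #M / 3 →
      ∑ a ∈ leftover M x, a + x = ∑ a ∈ M, a := by
    intro x hx
    obtain ⟨r, hr⟩ := hodd
    rw [← hM.sum_leftover_add x, hx, hr, add_nsmul, mul_nsmul, two_nsmul, ZModModule.add_self,
      nsmul_zero, zero_add, one_nsmul]
  rw [← card_powersetCard]
  refine card_le_card_of_injOn (leftover M) (fun x hxfull => ?_) (fun x hxfull y hyfull hxy => ?_)
  · exact mem_powersetCard.2 ⟨leftover_subset x, hM.card_leftover_eq_mod (mem_filter.1 hxfull).2⟩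
  · have hsum := (hx x (mem_filter.1 hxfull).2).trans (hx y (mem_filter.1 hyfull).2).symm
    rw [hxy] at hsum
    exact add_left_cancel hsum

lemma IsSidon.card_eq_sum_card_filter_sum_eq (hM : IsSidon M)
    {F : Finset (Finset (Fin t → ZMod 2))} (hF : F ⊆ M.powersetCard 3) :
    #F = ∑ x ∈ Mᶜ, #{A ∈ F | ∑ a ∈ A, a = x} := by
  refine card_eq_sum_card_fiberwise fun A hA => ?_
  obtain ⟨hAM, hA3⟩ := mem_powersetCard.1 (hF hA)
  simpa using hM.sum_notMem_of_card_eq_three hAM hA3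

lemma IsSidon.choose_three_eq_sum (hM : IsSidon M) :
    (#M).choose 3 = ∑ x ∈ Mᶜ, #(triplesWithSum M x) := by
  rw [← card_powersetCard]
  exact hM.card_eq_sum_card_filter_sum_eq Subset.rfl

lemma IsSidon.choose_two_pred_eq_sum (hM : IsSidon M) {p : Fin t → ZMod 2} (hp : p ∈ M) :
    (#M - 1).choose 2 = ∑ x ∈ Mᶜ, #{A ∈ triplesWithSum M x | p ∈ A} := by
  have hthrough : #{A ∈ M.powersetCard 3 | p ∈ A} = (#M - 1).choose 2 := by
    simpa using card_filter_powersetCard_subset {p} M 3 (by simpa using hp) (by simp)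
  rw [← hthrough, hM.card_eq_sum_card_filter_sum_eq (filter_subset _ _)]
  simp only [triplesWithSum, filter_filter, and_comm]

lemma IsSidon.card_filter_mem_triplesWithSum_le_one (hM : IsSidon M) (p x : Fin t → ZMod 2) :
    #{A ∈ triplesWithSum M x | p ∈ A} ≤ 1 := by
  refine card_le_one.2 fun A hA B hB => ?_
  obtain ⟨hAx, hpA⟩ := mem_filter.1 hA
  obtain ⟨hBx, hpB⟩ := mem_filter.1 hB
  by_contra hne
  exact disjoint_left.1 (hM.pairwiseDisjoint_triplesWithSum x hAx hBx hne) hpA hpB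

lemma IsSidon.choose_three_le (hM : IsSidon M) : (#M).choose 3 ≤ #Mᶜ * (#M / 3) := by
  rw [hM.choose_three_eq_sum]
  exact sum_le_card_nsmul _ _ _ fun x _ => hM.card_triplesWithSum_le x

lemma IsSidon.choose_three_add_choose_two_le (hM : IsSidon M) (hmod : #M % 3 ≠ 0)
    (heven : Even (#M / 3)) :
    (#M).choose 3 + (#M - 1).choose 2 ≤ #Mᶜ * (#M / 3) := by
  obtain ⟨p, hp, hpleft⟩ := hM.exists_mem_leftover hmod heven
  rw [hM.choose_three_eq_sum, hM.choose_two_pred_eq_sum hp, ← sum_add_distrib]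
  refine sum_le_card_nsmul _ _ _ fun x _ => ?_
  have hle := hM.card_triplesWithSum_le x
  have hthrough := hM.card_filter_mem_triplesWithSum_le_one p x
  by_cases hx : #(triplesWithSum M x) = #M / 3
  · have hnone : #{A ∈ triplesWithSum M x | p ∈ A} = 0 := by
      refine card_eq_zero.2 (filter_eq_empty_iff.2 fun A hA hpA => ?_)
      exact (mem_sdiff.1 (hpleft x hx)).2 (mem_biUnion.2 ⟨A, hA, hpA⟩)
    omega
  · omega

lemma IsSidon.choose_three_le_add_choose_mod_three (hM : IsSidon M) (hodd : Odd (#M / 3)) :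
    (#M).choose 3 ≤ #Mᶜ * (#M / 3 - 1) + (#M).choose (#M % 3) := by
  calc (#M).choose 3 = ∑ x ∈ Mᶜ, #(triplesWithSum M x) := hM.choose_three_eq_sum
    _ ≤ ∑ x ∈ Mᶜ, ((#M / 3 - 1) + if #(triplesWithSum M x) = #M / 3 then 1 else 0) := by
        refine sum_le_sum fun x _ => ?_
        have := hM.card_triplesWithSum_le x
        split_ifs <;> omega
    _ = #Mᶜ * (#M / 3 - 1) + #{x ∈ Mᶜ | #(triplesWithSum M x) = #M / 3} := by
        rw [sum_add_distrib, sum_const, smul_eq_mul, card_filter]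
    _ ≤ #Mᶜ * (#M / 3 - 1) + (#M).choose (#M % 3) := by
        gcongr
        exact (card_le_card (filter_subset_filter _ (subset_univ _))).trans
          (hM.card_filter_card_triplesWithSum_eq_le hodd)

end SidonSets

section CardinalityBounds

lemma six_mul_choose_three (k : ℕ) : 6 * (k.choose 3 : ℤ) = k * (k - 1) * (k - 2) := by
  obtain _ | _ | m := k
  · simp
  · simp [Nat.choose]
  · have h := Nat.descFactorial_eq_factorial_mul_choose (m + 2) 3
    simp only [Nat.descFactorial_succ, Nat.descFactorial_zero, Nat.factorial, Nat.add_sub_cancel,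
      show m + 2 - 1 = m + 1 from rfl, Nat.sub_zero] at h
    push_cast
    zify at h
    linear_combination -h

lemma two_mul_choose_two_pred {k : ℕ} (hk : k ≠ 0) :
    2 * ((k - 1).choose 2 : ℤ) = (k - 1) * (k - 2) := by
  obtain ⟨m, rfl⟩ := Nat.exists_eq_succ_of_ne_zero hk
  have h := Nat.add_one_mul_choose_eq m 2
  have h3 := six_mul_choose_three (m + 1)
  rw [Nat.succ_sub_one]
  refine mul_left_cancel₀ (Nat.cast_add_one_ne_zero m) ?_
  zify at h
  push_cast at h3 ⊢
  linear_combination 2 * h + h3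

variable {t : ℕ} {M : Finset (Fin t → ZMod 2)}

lemma two_mul_card_compl (M : Finset (Fin t → ZMod 2)) :
    2 * (#Mᶜ : ℤ) = 2 ^ (t + 1) - 2 * #M := by
  have h : #Mᶜ + #M = 2 ^ t := by
    rw [card_compl_add_card, Fintype.card_fun, ZMod.card, Fintype.card_fin]
  zify at h
  rw [pow_succ]
  linear_combination 2 * h

lemma IsSidon.sq_add_two_le (hM : IsSidon M) (hk : M.Nonempty) :
    #M ^ 2 + 2 ≤ 2 ^ (t + 1) + #M := by
  have hcount := hM.choose_three_le
  have hdiv : 3 * (#M / 3) ≤ #M := Nat.mul_div_le _ _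
  have hchoose := six_mul_choose_three #M
  have hcompl := two_mul_card_compl M
  have hpos := card_pos.2 hk
  zify at hcount hdiv hpos ⊢
  refine le_of_mul_le_mul_left ?_ hpos
  nlinarith [mul_le_mul_of_nonneg_left hdiv (Nat.cast_nonneg (α := ℤ) #Mᶜ)]

lemma IsSidon.sq_add_card_le (hM : IsSidon M) (hk : 2 < #M) (hmod : #M % 3 = 2) :
    #M ^ 2 + #M ≤ 2 ^ (t + 1) := by
  have hcount := hM.choose_three_le
  have hdiv : 3 * (#M / 3) + 2 = #M := by omega
  have hchoose := six_mul_choose_three #M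
  have hcompl := two_mul_card_compl M
  zify at hcount hdiv hk ⊢
  refine le_of_mul_le_mul_left ?_ (sub_pos.2 hk)
  linear_combination 6 * hcount - hchoose + 2 * #Mᶜ * hdiv + (#M - 2) * hcompl

lemma IsSidon.sq_add_three_mul_card_le_add_six (hM : IsSidon M) (hk : 1 < #M)
    (hmod : #M % 6 = 1) : #M ^ 2 + 3 * #M ≤ 2 ^ (t + 1) + 6 := by
  have hcount := hM.choose_three_add_choose_two_le (by omega) (by grind)
  have hdiv : 3 * (#M / 3) + 1 = #M := by omega
  have hchoose := six_mul_choose_three #M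
  have hchoose' := two_mul_choose_two_pred (by omega : #M ≠ 0)
  have hcompl := two_mul_card_compl M
  zify at hcount hdiv hk ⊢
  refine le_of_mul_le_mul_left ?_ (sub_pos.2 hk)
  linear_combination 6 * hcount - hchoose - 3 * hchoose' + 2 * #Mᶜ * hdiv + (#M - 1) * hcompl

lemma IsSidon.sq_add_four_mul_card_le_add_three (hM : IsSidon M) (hk : 2 < #M)
    (hmod : #M % 6 = 2) : #M ^ 2 + 4 * #M ≤ 2 ^ (t + 1) + 3 := by
  have hcount := hM.choose_three_add_choose_two_le (by omega) (by grind)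
  have hdiv : 3 * (#M / 3) + 2 = #M := by omega
  have hchoose := six_mul_choose_three #M
  have hchoose' := two_mul_choose_two_pred (by omega : #M ≠ 0)
  have hcompl := two_mul_card_compl M
  zify at hcount hdiv hk ⊢
  refine le_of_mul_le_mul_left ?_ (sub_pos.2 hk)
  linear_combination 6 * hcount - hchoose - 3 * hchoose' + 2 * #Mᶜ * hdiv + (#M - 2) * hcompl

lemma IsSidon.sq_add_two_mul_card_add_two_le (hM : IsSidon M) (hk : 3 < #M)
    (hmod : #M % 6 = 3) : #M ^ 2 + 2 * #M + 2 ≤ 2 ^ (t + 1) := by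
  have hcount := hM.choose_three_le_add_choose_mod_three (by grind)
  rw [show #M % 3 = 0 by omega, Nat.choose_zero_right] at hcount
  have hdiv : 3 * (#M / 3 - 1) + 3 = #M := by omega
  have hchoose := six_mul_choose_three #M
  have hcompl := two_mul_card_compl M
  zify at hcount hdiv hk ⊢
  refine le_of_mul_le_mul_left ?_ (sub_pos.2 hk)
  linear_combination 6 * hcount - hchoose + 2 * #Mᶜ * hdiv + (#M - 3) * hcompl

lemma IsSidon.sq_add_three_mul_card_le (hM : IsSidon M) (hk : 4 < #M) (hmod : #M % 6 = 4) :
    #M ^ 2 + 3 * #M ≤ 2 ^ (t + 1) := by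
  have hcount := hM.choose_three_le_add_choose_mod_three (by grind)
  rw [show #M % 3 = 1 by omega, Nat.choose_one_right] at hcount
  have hdiv : 3 * (#M / 3 - 1) + 4 = #M := by omega
  have hchoose := six_mul_choose_three #M
  have hcompl := two_mul_card_compl M
  zify at hcount hdiv hk ⊢
  refine le_of_mul_le_mul_left ?_ (sub_pos.2 hk)
  linear_combination 6 * hcount - hchoose + 2 * #Mᶜ * hdiv + (#M - 4) * hcompl

end CardinalityBounds

section SMax

variable {t : ℕ}

lemma isSidon_empty : IsSidon (∅ : Finset (Fin t → ZMod 2)) := by simp [IsSidon]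

lemma bddAbove_card_isSidon (t : ℕ) :
    BddAbove {n : ℕ | ∃ M : Finset (Fin t → ZMod 2), IsSidon M ∧ #M = n} := by
  refine ⟨Fintype.card (Fin t → ZMod 2), ?_⟩
  rintro _ ⟨M, -, rfl⟩
  exact card_le_univ M

lemma IsSidon.card_le_sMax {M : Finset (Fin t → ZMod 2)} (hM : IsSidon M) : #M ≤ sMax t :=
  le_csSup (bddAbove_card_isSidon t) ⟨M, hM, rfl⟩

lemma exists_isSidon_card_eq_of_le_sMax {k : ℕ} (hk : k ≤ sMax t) :
    ∃ M : Finset (Fin t → ZMod 2), IsSidon M ∧ #M = k := by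
  obtain ⟨M, hM, hcard⟩ :=
    Nat.sSup_mem (s := {n : ℕ | ∃ M : Finset (Fin t → ZMod 2), IsSidon M ∧ #M = n})
      ⟨0, ∅, isSidon_empty, card_empty⟩ (bddAbove_card_isSidon t)
  obtain ⟨A, hA, hAk⟩ := exists_subset_card_eq (hk.trans_eq hcard.symm)
  exact ⟨A, hM.subset hA, hAk⟩

variable {N : ℕ}

lemma sMax_le_self (hD : 2 ^ (t + 1) ≤ N ^ 2 + N) : sMax t ≤ N := by
  by_contra! h
  obtain ⟨M, hM, hcard⟩ := exists_isSidon_card_eq_of_le_sMax (Nat.succ_le_of_lt h)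
  have hbound := hM.sq_add_two_le (card_pos.1 (by omega))
  rw [hcard] at hbound
  nlinarith

lemma sMax_le_sub_one (hD : 2 ^ (t + 1) ≤ N ^ 2 + N) (hN : 4 < N)
    (hmod : N % 6 = 1 ∨ N % 6 = 2 ∨ N % 6 = 4 ∨ N % 6 = 5 ∧ 2 ^ (t + 1) < N ^ 2 + N) :
    sMax t ≤ N - 1 := by
  by_contra! h
  obtain ⟨M, hM, rfl⟩ := exists_isSidon_card_eq_of_le_sMax (by omega : N ≤ sMax t)
  obtain hmod | hmod | hmod | ⟨hmod, hlt⟩ := hmod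
  · have hbound := hM.sq_add_three_mul_card_le_add_six (by omega) hmod
    omega
  · have hbound := hM.sq_add_four_mul_card_le_add_three (by omega) hmod
    omega
  · have hbound := hM.sq_add_three_mul_card_le hN hmod
    omega
  · have hbound := hM.sq_add_card_le (by omega) (by omega)
    omega

lemma sMax_le_sub_two (hD : 2 ^ (t + 1) ≤ N ^ 2 + N) (hN : 6 < N)
    (hmod : N % 6 = 3 ∨ N % 6 = 2 ∧ 2 ^ (t + 1) + 8 < N ^ 2 + N ∨
      N % 6 = 4 ∧ 2 ^ (t + 1) ≤ N ^ 2 ∨ N % 6 = 5 ∧ 2 ^ (t + 1) + 2 < N ^ 2 + N) :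
    sMax t ≤ N - 2 := by
  by_contra! h
  obtain ⟨M, hM, hcard⟩ := exists_isSidon_card_eq_of_le_sMax (by omega : N - 1 ≤ sMax t)
  obtain rfl : N = #M + 1 := by omega
  obtain hmod | ⟨hmod, hlt⟩ | ⟨hmod, hle⟩ | ⟨hmod, hlt⟩ := hmod
  · have hbound := hM.sq_add_four_mul_card_le_add_three (by omega) (by omega)
    nlinarith
  · have hbound := hM.sq_add_three_mul_card_le_add_six (by omega) (by omega)
    nlinarith
  · have hbound := hM.sq_add_two_mul_card_add_two_le (by omega) (by omega)
    nlinarith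
  · have hbound := hM.sq_add_three_mul_card_le (by omega) (by omega)
    nlinarith

lemma two_pow_mod_six {m : ℕ} (hm : m ≠ 0) : 2 ^ m % 6 = 2 ∨ 2 ^ m % 6 = 4 := by
  induction m, Nat.one_le_iff_ne_zero.2 hm using Nat.le_induction with
  | base => simp
  | succ m _ ih => omega

lemma sMax_le_of_odd (hodd : Odd t) (ht : 6 ≤ t) : sMax t ≤ 2 ^ ((t + 1) / 2) - 2 := by
  have hexp : (t + 1) / 2 * 2 = t + 1 := Nat.div_mul_cancel hodd.add_one.two_dvd
  have hsq : (2 ^ ((t + 1) / 2)) ^ 2 = 2 ^ (t + 1) := by rw [← pow_mul, hexp]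
  have hlarge : 2 ^ 4 ≤ 2 ^ ((t + 1) / 2) := Nat.pow_le_pow_right two_pos (by grind)
  refine sMax_le_sub_two (by omega) (by omega) ?_
  obtain hmod | hmod := two_pow_mod_six (by omega : (t + 1) / 2 ≠ 0)
  · exact .inr (.inl ⟨hmod, by omega⟩)
  · exact .inr (.inr (.inl ⟨hmod, hsq.ge⟩))

end SMax

section Codes

lemma hammingNorm_add_le {ι : Type*} [Fintype ι] {β : ι → Type*} [∀ i, DecidableEq (β i)]
    [∀ i, AddZeroClass (β i)] (x y : ∀ i, β i) :
    hammingNorm (x + y) ≤ hammingNorm x + hammingNorm y := by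
  classical
  refine (card_le_card fun i hi => ?_).trans (card_union_le _ _)
  simp only [mem_filter_univ, mem_union, Pi.add_apply] at hi ⊢
  by_contra! h
  exact hi (by rw [h.1, h.2, add_zero])

lemma exists_linearMap_ker_eq {K V W : Type*} [DivisionRing K] [AddCommGroup V] [Module K V]
    [FiniteDimensional K V] [AddCommGroup W] [Module K W] [FiniteDimensional K W]
    (C : Submodule K V) (h : Module.finrank K C + Module.finrank K W = Module.finrank K V) :
    ∃ φ : V →ₗ[K] W, LinearMap.ker φ = C := by
  have hquot : Module.finrank K (V ⧸ C) = Module.finrank K W := by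
    have := C.finrank_quotient_add_finrank
    omega
  refine ⟨(LinearEquiv.ofFinrankEq (V ⧸ C) W hquot).toLinearMap ∘ₗ C.mkQ, ?_⟩
  rw [LinearEquiv.ker_comp, Submodule.ker_mkQ]

lemma injOn_hammingNorm_le_of_ker {R ι W : Type*} [Ring R] [DecidableEq R] [Fintype ι]
    [AddCommGroup W] [Module R W] {φ : (ι → R) →ₗ[R] W} {e : ℕ}
    (hφ : ∀ v ∈ LinearMap.ker φ, v ≠ 0 → 2 * e < hammingNorm v) :
    Set.InjOn φ {v | hammingNorm v ≤ e} := by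
  intro v hv w hw hvw
  by_contra hne
  have hker : -v + w ∈ LinearMap.ker φ := by
    rw [LinearMap.mem_ker, map_add, map_neg, hvw, neg_add_cancel]
  have htriangle := hammingDist_triangle v 0 w
  rw [hammingDist_zero_right, hammingDist_zero_left, hammingDist_eq_hammingNorm] at htriangle
  have hlarge := hφ _ hker (neg_add_eq_zero.not.2 hne)
  rw [Set.mem_ofPred_eq] at hv hw
  omega

/-- The Hamming ball of radius one around the origin of `𝔽₂ⁿ`: zero and the unit vectors. A parity
check map of a code with minimum distance at least five maps it onto a Sidon set. -/
def unitHammingBall (n : ℕ) : Finset (Fin n → ZMod 2) :=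
  insert 0 (univ.image fun i => Pi.single i 1)

variable {n t : ℕ}

lemma mem_unitHammingBall {v : Fin n → ZMod 2} :
    v ∈ unitHammingBall n ↔ v = 0 ∨ ∃ i, Pi.single i 1 = v := by
  simp [unitHammingBall]

lemma card_unitHammingBall (n : ℕ) : #(unitHammingBall n) = n + 1 := by
  have hinj : Function.Injective fun i : Fin n => (Pi.single i 1 : Fin n → ZMod 2) := by
    intro i j h
    by_contra hij
    simpa [hij] using congrFun h i
  rw [unitHammingBall, card_insert_of_notMem (by simp), card_image_of_injective _ hinj, card_univ,
    Fintype.card_fin]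

lemma hammingNorm_le_one_of_mem_unitHammingBall {v : Fin n → ZMod 2}
    (hv : v ∈ unitHammingBall n) : hammingNorm v ≤ 1 := by
  obtain rfl | ⟨i, rfl⟩ := mem_unitHammingBall.1 hv
  · simp
  · refine card_le_one.2 fun j hj k hk => ?_
    simp_all [Pi.single_apply]

lemma eq_zero_of_mem_unitHammingBall_of_ne {v w : Fin n → ZMod 2} (hv : v ∈ unitHammingBall n)
    (hw : w ∈ unitHammingBall n) (hvw : v ≠ w) {i : Fin n} (hi : v i ≠ 0) : w i = 0 := by
  obtain rfl | ⟨j, rfl⟩ := mem_unitHammingBall.1 hv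
  · exact absurd rfl hi
  obtain rfl | ⟨k, rfl⟩ := mem_unitHammingBall.1 hw
  · rfl
  by_contra hk
  obtain rfl : i = j := by by_contra h; exact hi (Pi.single_eq_of_ne h 1)
  obtain rfl : i = k := by by_contra h; exact hk (Pi.single_eq_of_ne h 1)
  exact hvw rfl

lemma isSidon_unitHammingBall (n : ℕ) : IsSidon (unitHammingBall n) := by
  rintro a ha b hb c hc d hd ⟨hab, hac, had, hbc, hbd, -⟩ hsum
  wlog ha0 : a ≠ 0 generalizing a b
  · rw [not_ne_iff] at ha0
    exact this b hb a ha hab.symm hbc hbd hac had (by rw [add_comm, hsum]) (ha0 ▸ hab.symm)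
  obtain ⟨i, hi⟩ := Function.ne_iff.1 ha0
  have hsum_i := congrFun hsum i
  simp only [Pi.add_apply, eq_zero_of_mem_unitHammingBall_of_ne ha hb hab hi,
    eq_zero_of_mem_unitHammingBall_of_ne ha hc hac hi,
    eq_zero_of_mem_unitHammingBall_of_ne ha hd had hi, add_zero] at hsum_i
  exact hi hsum_i

lemma isSidon_image_unitHammingBall {φ : (Fin n → ZMod 2) →ₗ[ZMod 2] (Fin t → ZMod 2)}
    (hφ : Set.InjOn φ {v | hammingNorm v ≤ 2}) : IsSidon ((unitHammingBall n).image φ) := by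
  have hnorm_add {v w : Fin n → ZMod 2} (hv : v ∈ unitHammingBall n) (hw : w ∈ unitHammingBall n) :
      hammingNorm (v + w) ≤ 2 :=
    (hammingNorm_add_le v w).trans (add_le_add (hammingNorm_le_one_of_mem_unitHammingBall hv)
      (hammingNorm_le_one_of_mem_unitHammingBall hw))
  simp only [IsSidon, forall_mem_image]
  intro a ha b hb c hc d hd hne hsum
  rw [← map_add, ← map_add] at hsum
  refine isSidon_unitHammingBall n a ha b hb c hc d hd ?_
    (hφ (hnorm_add ha hb) (hnorm_add hc hd) hsum)
  exact ⟨ne_of_apply_ne φ hne.1, ne_of_apply_ne φ hne.2.1, ne_of_apply_ne φ hne.2.2.1,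
    ne_of_apply_ne φ hne.2.2.2.1, ne_of_apply_ne φ hne.2.2.2.2.1, ne_of_apply_ne φ hne.2.2.2.2.2⟩

lemma add_one_le_sMax_of_code {C : Submodule (ZMod 2) (Fin n → ZMod 2)}
    (hdim : Module.finrank (ZMod 2) C + t = n) (hdist : ∀ v ∈ C, v ≠ 0 → 5 ≤ hammingNorm v) :
    n + 1 ≤ sMax t := by
  obtain ⟨φ, rfl⟩ := exists_linearMap_ker_eq (W := Fin t → ZMod 2) C (by simpa using hdim)
  have hφ : Set.InjOn φ {v | hammingNorm v ≤ 2} := injOn_hammingNorm_le_of_ker hdist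
  have hcard : #((unitHammingBall n).image φ) = n + 1 := by
    rw [card_image_of_injOn, card_unitHammingBall]
    exact hφ.mono fun v hv => (hammingNorm_le_one_of_mem_unitHammingBall hv).trans one_le_two
  exact hcard.symm.le.trans (isSidon_image_unitHammingBall hφ).card_le_sMax

end Codes

section Rounding

lemma two_mul_sqrt_two_pow_mul_rpow_neg (t : ℕ) (e : ℝ) :
    2 * (√(2 ^ (t + 1)) * (2 : ℝ) ^ (-e)) = 2 ^ (((t : ℝ) + 3) / 2 - e) := by
  calc 2 * (√(2 ^ (t + 1)) * (2 : ℝ) ^ (-e))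
    _ = 2 ^ (1 : ℝ) * (2 ^ (((t + 1 : ℕ) : ℝ) * (1 / 2)) * 2 ^ (-e)) := by
      rw [Real.rpow_one, Real.rpow_mul two_pos.le, Real.rpow_natCast, Real.sqrt_eq_rpow]
    _ = 2 ^ (((t : ℝ) + 3) / 2 - e) := by
      rw [← Real.rpow_add two_pos, ← Real.rpow_add two_pos]
      congr 1
      push_cast
      ring

variable {t N : ℕ} {ε : ℝ}

/- Square `√(2 ^ (t + 1)) + 2 ^ (-e) ≤ N + 1 / 2`: the cross term has to absorb `m` and the `1 / 4`
by which `(N + 1 / 2) ^ 2` exceeds `N ^ 2 + N`. -/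
lemma two_pow_add_lt_sq_add_self {e : ℝ} {m : ℕ} (hε : ε = √(2 ^ (t + 1)) + 0.5 - N)
    (hle : ε ≤ 1 - 2 ^ (-e)) (hm : m + 1 / 4 ≤ (2 : ℝ) ^ (((t : ℝ) + 3) / 2 - e)) :
    2 ^ (t + 1) + m < N ^ 2 + N := by
  have hδ : (0 : ℝ) < 2 ^ (-e) := by positivity
  have hprod := two_mul_sqrt_two_pow_mul_rpow_neg t e
  have hsq : √(2 ^ (t + 1)) ^ 2 = (2 : ℝ) ^ (t + 1) := Real.sq_sqrt (by positivity)
  have hN : √(2 ^ (t + 1)) + 2 ^ (-e) ≤ (N : ℝ) + 1 / 2 := by linarith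
  have hN_sq := pow_le_pow_left₀ (by positivity) hN 2
  suffices (2 : ℝ) ^ (t + 1) + m < N ^ 2 + N by exact_mod_cast this
  nlinarith

lemma two_pow_le_sq_add_self (hε : ε = √(2 ^ (t + 1)) + 0.5 - N) (hlt : ε < 1) :
    2 ^ (t + 1) ≤ N ^ 2 + N := by
  have hN : √(2 ^ (t + 1)) < (N : ℝ) + 1 / 2 := by linarith
  have hsq := (Real.sqrt_lt' (by positivity)).1 hN
  have hlt : (2 : ℝ) ^ (t + 1) < N ^ 2 + N + 1 := by linarith
  exact Nat.lt_succ_iff.1 (by exact_mod_cast hlt)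

lemma two_pow_le_sq (hε : ε = √(2 ^ (t + 1)) + 0.5 - N) (hle : ε ≤ 0.5) :
    2 ^ (t + 1) ≤ N ^ 2 := by
  have hN : √(2 ^ (t + 1)) ≤ (N : ℝ) := by linarith
  exact_mod_cast (Real.sqrt_le_left N.cast_nonneg).1 hN

lemma two_pow_add_eight_lt (hε : ε = √(2 ^ (t + 1)) + 0.5 - N)
    (hle : ε ≤ 1 - 2 ^ (-(((t : ℝ) - 4) / 2))) : 2 ^ (t + 1) + 8 < N ^ 2 + N := by
  refine two_pow_add_lt_sq_add_self hε hle ?_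
  rw [show ((t : ℝ) + 3) / 2 - (t - 4) / 2 = (7 : ℕ) * (1 / 2) by push_cast; ring,
    Real.rpow_mul two_pos.le, Real.rpow_natCast, ← Real.sqrt_eq_rpow]
  exact Real.le_sqrt_of_sq_le (by norm_num)

lemma two_pow_add_two_lt (hε : ε = √(2 ^ (t + 1)) + 0.5 - N)
    (hle : ε ≤ 1 - 2 ^ (-(((t : ℝ) - 5) / 2))) : 2 ^ (t + 1) + 2 < N ^ 2 + N := by
  refine two_pow_add_lt_sq_add_self hε hle ?_
  rw [show ((t : ℝ) + 3) / 2 - (t - 5) / 2 = (4 : ℕ) by push_cast; ring, Real.rpow_natCast]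
  norm_num

lemma two_pow_lt_sq_add_self (hε : ε = √(2 ^ (t + 1)) + 0.5 - N)
    (hle : ε ≤ 1 - 2 ^ (-(((t : ℝ) + 7) / 2))) : 2 ^ (t + 1) < N ^ 2 + N := by
  refine two_pow_add_lt_sq_add_self (m := 0) hε hle ?_
  rw [show ((t : ℝ) + 3) / 2 - (t + 7) / 2 = -(2 : ℕ) by push_cast; ring,
    Real.rpow_neg two_pos.le, Real.rpow_natCast]
  norm_num

end Rounding

section MainCases

variable {t N a b l : ℕ} {ε : ℝ}

lemma sMax_le_sub_of_odd_quotient (hD : 2 ^ (t + 1) ≤ N ^ 2 + N) (hN : 6 < N)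
    (hab : N - 4 = 3 * a + b) (hb : b < 3) (hε : ε = √(2 ^ (t + 1)) + 0.5 - N) (ha : Odd a)
    (hl_zero : b = 0 → l = 1)
    (hl_one_le : b = 1 → ε ≤ 1 - 2 ^ (-(((t : ℝ) - 4) / 2)) → l = 2)
    (hl_one_gt : b = 1 → 1 - 2 ^ (-(((t : ℝ) - 4) / 2)) < ε → l = 1)
    (hl_two : b = 2 → l = 2) : sMax t ≤ N - l := by
  have hmod : N % 6 = b + 1 := by grind
  interval_cases b
  · rw [hl_zero rfl]
    exact sMax_le_sub_one hD (by omega) (.inl hmod)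
  · obtain hle | hlt := le_or_gt ε (1 - 2 ^ (-(((t : ℝ) - 4) / 2)))
    · rw [hl_one_le rfl hle]
      exact sMax_le_sub_two hD hN (.inr (.inl ⟨hmod, two_pow_add_eight_lt hε hle⟩))
    · rw [hl_one_gt rfl hlt]
      exact sMax_le_sub_one hD (by omega) (.inr (.inl hmod))
  · rw [hl_two rfl]
    exact sMax_le_sub_two hD hN (.inl hmod)

lemma sMax_le_sub_of_even_quotient (hD : 2 ^ (t + 1) ≤ N ^ 2 + N) (hN : 6 < N)
    (hab : N - 4 = 3 * a + b) (hb : b < 3) (hε : ε = √(2 ^ (t + 1)) + 0.5 - N) (ha : Even a)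
    (hl_zero_le : b = 0 → ε ≤ 0.5 → l = 2) (hl_zero_gt : b = 0 → 0.5 < ε → l = 1)
    (hl_one_le : b = 1 → ε ≤ 1 - 2 ^ (-(((t : ℝ) - 5) / 2)) → l = 2)
    (hl_one_mid : b = 1 → 1 - 2 ^ (-(((t : ℝ) - 5) / 2)) < ε →
      ε ≤ 1 - 2 ^ (-(((t : ℝ) + 7) / 2)) → l = 1)
    (hl_one_gt : b = 1 → 1 - 2 ^ (-(((t : ℝ) + 7) / 2)) < ε → l = 0)
    (hl_two : b = 2 → l = 0) : sMax t ≤ N - l := by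
  have hmod : N % 6 = (b + 4) % 6 := by grind
  interval_cases b
  · obtain hle | hlt := le_or_gt ε 0.5
    · rw [hl_zero_le rfl hle]
      exact sMax_le_sub_two hD hN (.inr (.inr (.inl ⟨hmod, two_pow_le_sq hε hle⟩)))
    · rw [hl_zero_gt rfl hlt]
      exact sMax_le_sub_one hD (by omega) (.inr (.inr (.inl hmod)))
  · obtain hle₇ | hlt₇ := le_or_gt ε (1 - 2 ^ (-(((t : ℝ) + 7) / 2)))
    · obtain hle₅ | hlt₅ := le_or_gt ε (1 - 2 ^ (-(((t : ℝ) - 5) / 2)))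
      · rw [hl_one_le rfl hle₅]
        exact sMax_le_sub_two hD hN (.inr (.inr (.inr ⟨hmod, two_pow_add_two_lt hε hle₅⟩)))
      · rw [hl_one_mid rfl hlt₅ hle₇]
        exact sMax_le_sub_one hD (by omega)
          (.inr (.inr (.inr ⟨hmod, two_pow_lt_sq_add_self hε hle₇⟩)))
    · rw [hl_one_gt rfl hlt₇]
      exact sMax_le_self hD
  · rw [hl_two rfl]
    exact sMax_le_self hD

end MainCases

theorem improved_codes_non_existence_sidon_bound (t : ℕ) (ht : 6 ≤ t)
    (N a b l : ℕ) (ε : ℝ)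
    (hN : N = ⌊Real.sqrt ((2 : ℝ) ^ (t + 1)) + 0.5⌋₊)
    (hab : N - 4 = 3 * a + b) (hb : b < 3)
    (hε : ε = Real.sqrt ((2 : ℝ) ^ (t + 1)) + 0.5 - N)
    (hl1 : Odd a → b = 0 → l = 1)
    (hl2 : Odd a → b = 1 → ε ≤ 1 - (2 : ℝ) ^ (-(((t : ℝ) - 4) / 2)) → l = 2)
    (hl3 : Odd a → b = 1 → 1 - (2 : ℝ) ^ (-(((t : ℝ) - 4) / 2)) < ε → l = 1)
    (hl4 : Odd a → b = 2 → l = 2)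
    (hl5 : Even a → b = 0 → ε ≤ 0.5 → l = 2)
    (hl6 : Even a → b = 0 → (0.5 : ℝ) < ε → l = 1)
    (hl7 : Even a → b = 1 → ε ≤ 1 - (2 : ℝ) ^ (-(((t : ℝ) - 5) / 2)) → l = 2)
    (hl8 : Even a → b = 1 → 1 - (2 : ℝ) ^ (-(((t : ℝ) - 5) / 2)) < ε →
      ε ≤ 1 - (2 : ℝ) ^ (-(((t : ℝ) + 7) / 2)) → l = 1)
    (hl9 : Even a → b = 1 → 1 - (2 : ℝ) ^ (-(((t : ℝ) + 7) / 2)) < ε → l = 0)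
    (hl10 : Even a → b = 2 → l = 0) :
    (¬ ∃ C : Submodule (ZMod 2) (Fin (N - l) → ZMod 2),
        Module.finrank (ZMod 2) C = (N - l) - t ∧
        ∀ v ∈ C, v ≠ 0 → 5 ≤ hammingNorm v) ∧
    (Odd t → sMax t ≤ 2 ^ ((t + 1) / 2) - 2) ∧
    (Even t → sMax t ≤ N - l) := by
  have hlt : ε < 1 := by
    have := Nat.lt_floor_add_one (√((2 : ℝ) ^ (t + 1)) + 0.5)
    rw [hε, hN]
    linarith
  have hD : 2 ^ (t + 1) ≤ N ^ 2 + N := two_pow_le_sq_add_self hε hlt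
  have hlower : t + 1 ≤ sMax t := by
    simpa [card_unitHammingBall] using (isSidon_unitHammingBall t).card_le_sMax
  have hN6 : 6 < N := by
    have := sMax_le_self hD
    omega
  have hmax : sMax t ≤ N - l := by
    obtain ha | ha := Nat.even_or_odd a
    · exact sMax_le_sub_of_even_quotient hD hN6 hab hb hε ha (hl5 ha) (hl6 ha) (hl7 ha) (hl8 ha)
        (hl9 ha) (hl10 ha)
    · exact sMax_le_sub_of_odd_quotient hD hN6 hab hb hε ha (hl1 ha) (hl2 ha) (hl3 ha) (hl4 ha)
  refine ⟨?_, fun hodd => sMax_le_of_odd hodd ht, fun _ => hmax⟩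
  rintro ⟨C, hdim, hdist⟩
  have := add_one_le_sMax_of_code (t := t) (by omega) hdist
  omega
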